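/- arXiv:1603.01956 — 7 statements merged into one kernel-verified Lean document; each statement's English description precedes it below -/
import Mathlib

section
/- Let S be a bounded nonempty subset of a Minkowski space with rad(S) ≤ 1. Then rad(bh₁(S)) = rad(S). In particular, bh₁(S) is b-bounded whenever S is b-bounded. -/
open Metric Set

/-- The ball hull of `S`: intersection of all closed balls of radius 1 containing `S`. -/
def ballHull {E : Type*} [NormedAddCommGroup E] (S : Set E) : Set E :=
  ⋂ x ∈ {x : E | S ⊆ closedBall x 1}, closedBall x 1

/-- The circumradius of `S`: the least `r ≥ 0` such that `S` is contained in some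
closed ball of radius `r`. -/
noncomputable def circumradius {E : Type*} [NormedAddCommGroup E] (S : Set E) : ℝ :=
  sInf {r : ℝ | 0 ≤ r ∧ ∃ x : E, S ⊆ closedBall x r}

/-!
A closed ball `B` of radius `r ≤ 1` is its own ball hull: a point `y` outside `B` is separated
from it by a unit ball containing `B`, obtained by moving the centre away from `y` by `1 - r`.
Hence `S` and its ball hull lie in the same balls of radius at most `1`. In a proper space the
infimum defining the circumradius is attained, so circumradius at most `1` does give a unit ball
around `S`.
-/

section Normed

variable {E : Type*} [NormedAddCommGroup E] {S T : Set E} {x : E} {r : ℝ}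

lemma circumradius_le (hr : 0 ≤ r) (h : S ⊆ closedBall x r) : circumradius S ≤ r :=
  csInf_le ⟨0, fun _ hs => hs.1⟩ ⟨hr, x, h⟩

lemma nonempty_setOf_exists_subset_closedBall (hS : Bornology.IsBounded S) :
    {r : ℝ | 0 ≤ r ∧ ∃ x : E, S ⊆ closedBall x r}.Nonempty := by
  obtain ⟨r, hr, h⟩ := hS.subset_closedBall_lt 0 0
  exact ⟨r, hr.le, 0, h⟩

lemma le_circumradius (hS : Bornology.IsBounded S) {a : ℝ}
    (h : ∀ r x, 0 ≤ r → S ⊆ closedBall x r → a ≤ r) : a ≤ circumradius S :=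
  le_csInf (nonempty_setOf_exists_subset_closedBall hS) fun r ⟨hr, x, hx⟩ => h r x hr hx

lemma circumradius_mono (hST : S ⊆ T) (hT : Bornology.IsBounded T) :
    circumradius S ≤ circumradius T :=
  le_circumradius hT fun _ _ hr h => circumradius_le hr (hST.trans h)

lemma exists_subset_closedBall_of_circumradius_lt (hS : Bornology.IsBounded S)
    (h : circumradius S < r) : ∃ x, S ⊆ closedBall x r := by
  obtain ⟨r', ⟨-, x, hx⟩, hr'⟩ :=
    exists_lt_of_csInf_lt (nonempty_setOf_exists_subset_closedBall hS) h
  exact ⟨x, hx.trans (closedBall_subset_closedBall hr'.le)⟩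

lemma setOf_subset_closedBall_eq_biInter (S : Set E) (r : ℝ) :
    {x | S ⊆ closedBall x r} = ⋂ s ∈ S, closedBall s r := by
  ext x
  simp only [mem_ofPred_eq, subset_def, mem_iInter₂, mem_closedBall_comm]

lemma isCompact_setOf_subset_closedBall [ProperSpace E] (hS : S.Nonempty) (r : ℝ) :
    IsCompact {x | S ⊆ closedBall x r} := by
  rw [setOf_subset_closedBall_eq_biInter]
  obtain ⟨s, hs⟩ := hS
  exact (isCompact_closedBall s r).of_isClosed_subset
    (isClosed_biInter fun _ _ => isClosed_closedBall) (biInter_subset_of_mem hs)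

-- The centres of the balls of radius `r > circumradius S` around `S` form a decreasing family of
-- nonempty compact sets.
lemma exists_subset_closedBall_circumradius [ProperSpace E] (hne : S.Nonempty)
    (hS : Bornology.IsBounded S) : ∃ x, S ⊆ closedBall x (circumradius S) := by
  let centers : Ioi (circumradius S) → Set E := fun r => {x | S ⊆ closedBall x r}
  have hmono : Monotone centers := fun _ _ hr _ hx =>
    hx.trans (closedBall_subset_closedBall hr)
  have hcompact (r) : IsCompact (centers r) := isCompact_setOf_subset_closedBall hne r
  obtain ⟨x, hx⟩ := IsCompact.nonempty_iInter_of_directed_nonempty_isCompact_isClosed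
    centers hmono.directed_ge
    (fun r => exists_subset_closedBall_of_circumradius_lt hS r.2) hcompact
    (fun r => (hcompact r).isClosed)
  exact ⟨x, fun s hs => le_of_forall_gt_imp_ge_of_dense fun r hr => mem_iInter.1 hx ⟨r, hr⟩ hs⟩

lemma subset_ballHull (S : Set E) : S ⊆ ballHull S :=
  subset_iInter₂ fun _ h => h

lemma ballHull_mono (hST : S ⊆ T) : ballHull S ⊆ ballHull T :=
  biInter_subset_biInter_left fun _ hT => hST.trans hT

lemma ballHull_subset_closedBall_one (h : S ⊆ closedBall x 1) : ballHull S ⊆ closedBall x 1 :=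
  biInter_subset_of_mem h

end Normed

section NormedSpace

variable {E : Type*} [NormedAddCommGroup E] [NormedSpace ℝ E] {S : Set E} {x y : E} {r : ℝ}

lemma exists_dist_eq_and_dist_eq_add (hxy : y ≠ x) {t : ℝ} (ht : 0 ≤ t) :
    ∃ z, dist x z = t ∧ dist y z = dist y x + t := by
  have hd : 0 < dist y x := dist_pos.2 hxy
  have hc : 0 ≤ t / dist y x := by positivity
  refine ⟨AffineMap.lineMap y x (1 + t / dist y x), ?_, ?_⟩
  · rw [dist_right_lineMap, sub_add_cancel_left, norm_neg, Real.norm_of_nonneg hc,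
      div_mul_cancel₀ _ hd.ne']
  · rw [dist_left_lineMap, Real.norm_of_nonneg (by positivity), add_mul, one_mul,
      div_mul_cancel₀ _ hd.ne']

lemma ballHull_closedBall (hr₀ : 0 ≤ r) (hr₁ : r ≤ 1) :
    ballHull (closedBall x r) = closedBall x r := by
  refine Subset.antisymm (fun y hy => ?_) (subset_ballHull _)
  obtain rfl | hxy := eq_or_ne y x
  · exact mem_closedBall_self hr₀
  obtain ⟨z, hxz, hyz⟩ := exists_dist_eq_and_dist_eq_add hxy (sub_nonneg.2 hr₁)
  have hball : closedBall x r ⊆ closedBall z 1 :=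
    closedBall_subset_closedBall' (by rw [hxz, add_sub_cancel])
  have hy_le : dist y z ≤ 1 := ballHull_subset_closedBall_one hball hy
  rw [mem_closedBall]
  linarith

lemma ballHull_subset_closedBall (hr₀ : 0 ≤ r) (hr₁ : r ≤ 1) (h : S ⊆ closedBall x r) :
    ballHull S ⊆ closedBall x r :=
  (ballHull_mono h).trans_eq (ballHull_closedBall hr₀ hr₁)

theorem stmt_0_general (h : S ⊆ closedBall x 1) : circumradius (ballHull S) = circumradius S := by
  have hhull : ballHull S ⊆ closedBall x 1 := ballHull_subset_closedBall_one h
  apply le_antisymm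
  · refine le_circumradius (isBounded_closedBall.subset h) fun r y hr hy => ?_
    obtain hr₁ | hr₁ := le_total r 1
    · exact circumradius_le hr (ballHull_subset_closedBall hr hr₁ hy)
    · exact (circumradius_le zero_le_one hhull).trans hr₁
  · exact circumradius_mono (subset_ballHull S) (isBounded_closedBall.subset hhull)

end NormedSpace

theorem stmt_0 {E : Type*} [NormedAddCommGroup E] [NormedSpace ℝ E]
    [FiniteDimensional ℝ E] [Nontrivial E]
    (S : Set E) (hS : S.Nonempty) (hb : Bornology.IsBounded S)
    (hrad : circumradius S ≤ 1) :
    circumradius (ballHull S) = circumradius S ∧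
      (circumradius S < 1 → circumradius (ballHull S) < 1) := by
  have : ProperSpace E := FiniteDimensional.proper_real E
  obtain ⟨x, hx⟩ := exists_subset_closedBall_circumradius hS hb
  have heq := stmt_0_general (hx.trans (closedBall_subset_closedBall hrad))
  exact ⟨heq, heq.trans_lt⟩
end

section
/- Let K be a b-convex body in a Minkowski space. For every boundary point x₀ of K there exists y₀ such that K ⊆ B(y₀,1) and x₀ ∈ S(y₀,1); i.e., there is a supporting sphere of K passing through x₀. -/
open Metric Set

/-- A b-convex body: a bounded nonempty set equal to its ball hull. -/
def IsBConvexBody {E : Type*} [NormedAddCommGroup E] (K : Set E) : Prop :=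
  Bornology.IsBounded K ∧ K.Nonempty ∧ ballHull K = K

/-- `F` is an exposed b-face of `K`: `F = K ∩ S(y,1)` for some supporting sphere `S(y,1)`. -/
def IsExposedBFace {E : Type*} [NormedAddCommGroup E] (K F : Set E) : Prop :=
  ∃ y : E, K ⊆ closedBall y 1 ∧ (K ∩ sphere y 1).Nonempty ∧ F = K ∩ sphere y 1

/-- The set of b-exposed points of `K`. -/
def bExp {E : Type*} [NormedAddCommGroup E] (K : Set E) : Set E :=
  {x : E | ∃ y : E, K ⊆ closedBall y 1 ∧ K ∩ sphere y 1 = {x}}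

/-! A set `K` equal to its ball hull is the intersection of the unit balls centred at the points of
`C = {y | K ⊆ B(y, 1)}`, and `C`, itself an intersection of unit balls, is compact. Hence `x₀ ∈ K`
has a farthest point `y₀` in `C`. If `dist x₀ y₀ < 1`, then moving `x₀` by less than
`1 - dist x₀ y₀` keeps it in every ball `B(y, 1)` with `y ∈ C`, so `x₀` is an interior point. -/

section BallIntersection

variable {α : Type*} [PseudoMetricSpace α] {r : ℝ} {S : Set α} {x y : α}

/-- The ball intersection of `S`: the points within distance `r` of every point of `S`, that is,
the centres of the closed balls of radius `r` containing `S`. The ball hull of `S` is its twofold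
ball intersection with `r = 1`. -/
def ballIntersection (r : ℝ) (S : Set α) : Set α :=
  ⋂ x ∈ S, closedBall x r

theorem mem_ballIntersection : y ∈ ballIntersection r S ↔ ∀ x ∈ S, dist y x ≤ r := by
  simp only [ballIntersection, mem_iInter, mem_closedBall]

theorem mem_ballIntersection_iff_subset_closedBall :
    y ∈ ballIntersection r S ↔ S ⊆ closedBall y r := by
  simp only [mem_ballIntersection, subset_def, mem_closedBall, dist_comm y]

theorem isClosed_ballIntersection : IsClosed (ballIntersection r S) :=
  isClosed_biInter fun _ _ => isClosed_closedBall

theorem isCompact_ballIntersection [ProperSpace α] (hS : S.Nonempty) :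
    IsCompact (ballIntersection r S) :=
  let ⟨x, hx⟩ := hS
  (isCompact_closedBall x r).of_isClosed_subset isClosed_ballIntersection
    (biInter_subset_of_mem hx)

theorem ball_subset_ballIntersection {d : ℝ} (h : ∀ y ∈ S, dist x y ≤ d) :
    ball x (r - d) ⊆ ballIntersection r S := by
  refine fun z hz => mem_ballIntersection.2 fun y hy => ?_
  calc
    dist z y ≤ dist z x + dist x y := dist_triangle z x y
    _ ≤ (r - d) + d := add_le_add (mem_ball.1 hz).le (h y hy)
    _ = r := sub_add_cancel r d

theorem nonempty_of_mem_frontier_ballIntersection (hx : x ∈ frontier (ballIntersection r S)) :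
    S.Nonempty := by
  rw [nonempty_iff_ne_empty]
  rintro rfl
  simp [ballIntersection] at hx

theorem exists_mem_dist_eq_of_mem_frontier_ballIntersection (hS : IsCompact S)
    (hx : x ∈ frontier (ballIntersection r S)) : ∃ y ∈ S, dist x y = r := by
  obtain ⟨y, hy, hfarthest⟩ := hS.exists_isMaxOn (nonempty_of_mem_frontier_ballIntersection hx)
    (f := dist x) (by fun_prop)
  have hle : dist x y ≤ r :=
    mem_ballIntersection.1 (isClosed_ballIntersection.frontier_subset hx) y hy
  refine ⟨y, hy, hle.eq_of_not_lt fun hlt => hx.2 ?_⟩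
  exact interior_maximal (ball_subset_ballIntersection hfarthest) isOpen_ball
    (mem_ball_self (sub_pos.2 hlt))

end BallIntersection

theorem ballHull_eq_ballIntersection_ballIntersection {E : Type*} [NormedAddCommGroup E]
    (S : Set E) : ballHull S = ballIntersection 1 (ballIntersection 1 S) := by
  have centres_eq : {y : E | S ⊆ closedBall y 1} = ballIntersection 1 S :=
    Set.ext fun _ => mem_ballIntersection_iff_subset_closedBall.symm
  rw [ballHull, centres_eq, ← ballIntersection]

theorem stmt_2_general {E : Type*} [NormedAddCommGroup E] [ProperSpace E]
    {K : Set E} (hK : ballHull K = K) {x₀ : E} (hx₀ : x₀ ∈ frontier K) :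
    ∃ y₀ : E, K ⊆ closedBall y₀ 1 ∧ x₀ ∈ sphere y₀ 1 := by
  have hne : K.Nonempty := closure_nonempty_iff.1 ⟨x₀, frontier_subset_closure hx₀⟩
  rw [← hK, ballHull_eq_ballIntersection_ballIntersection] at hx₀
  obtain ⟨y₀, hy₀, hdist⟩ :=
    exists_mem_dist_eq_of_mem_frontier_ballIntersection (isCompact_ballIntersection hne) hx₀
  exact ⟨y₀, mem_ballIntersection_iff_subset_closedBall.1 hy₀, hdist⟩

theorem stmt_2 {E : Type*} [NormedAddCommGroup E] [NormedSpace ℝ E]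
    [FiniteDimensional ℝ E] [Nontrivial E]
    (K : Set E) (hK : IsBConvexBody K) (x₀ : E) (hx₀ : x₀ ∈ frontier K) :
    ∃ y₀ : E, K ⊆ closedBall y₀ 1 ∧ x₀ ∈ sphere y₀ 1 :=
  have := FiniteDimensional.proper_real E
  stmt_2_general hK.2.2 hx₀
end

section
/- Let K be a b-convex body in a Minkowski space. For every point x₀ ∉ K there exists y₀ such that K ⊆ B(y₀,1), K ∩ S(y₀,1) ≠ ∅, and x₀ ∉ B(y₀,1); i.e., there is a supporting sphere of K whose ball excludes x₀. -/
open Metric Set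

/-!
Push a unit ball that contains `K` but not `x` along the ray leaving its center away from `x`.
The distance from `x` to the center only grows, so `x` stays outside. As soon as the center is far
from `K` the ball no longer contains `K`, so by connectedness of the ray some intermediate ball
contains `K` and touches it, compactness of `K` preventing a gap at the last such ball.
-/

section Centers

variable {X : Type*} [PseudoMetricSpace X]

lemma isClosed_setOf_subset_closedBall (K : Set X) (r : ℝ) :
    IsClosed {z | K ⊆ closedBall z r} := by
  simp only [subset_def, mem_closedBall, ofPred_forall]
  exact isClosed_biInter fun _ _ =>
    isClosed_le (continuous_const.dist continuous_id) continuous_const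

lemma isOpen_setOf_subset_ball {K : Set X} (hK : IsCompact K) (r : ℝ) :
    IsOpen {z | K ⊆ ball z r} :=
  isOpen_iff_mem_nhds.2 fun _ hz => hK.eventually_forall_of_forall_eventually fun _ hp =>
    (continuous_snd.dist continuous_fst).continuousAt.eventually_lt_const (hz hp)

lemma exists_touching_closedBall_of_isPreconnected {T K : Set X} {y w : X} {r : ℝ}
    (hT : IsPreconnected T) (hK : IsCompact K) (hyT : y ∈ T) (hy : K ⊆ closedBall y r)
    (hwT : w ∈ T) (hw : ¬K ⊆ closedBall w r) :
    ∃ z ∈ T, K ⊆ closedBall z r ∧ (K ∩ sphere z r).Nonempty := by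
  by_contra! no_touching
  have subset_ball {z : X} (hzT : z ∈ T) (hz : K ⊆ closedBall z r) : K ⊆ ball z r :=
    fun p hp => lt_of_le_of_ne (hz hp) fun p_mem_sphere =>
      (no_touching z hzT hz).subset ⟨hp, p_mem_sphere⟩
  obtain ⟨z, -, hz_ball, hz_not⟩ := hT {z | K ⊆ ball z r} {z | K ⊆ closedBall z r}ᶜ
    (isOpen_setOf_subset_ball hK r) (isClosed_setOf_subset_closedBall K r).isOpen_compl
    (fun z hzT => (em (K ⊆ closedBall z r)).imp_left (subset_ball hzT))
    ⟨y, hyT, subset_ball hyT hy⟩ ⟨w, hwT, hw⟩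
  exact hz_not (hz_ball.trans ball_subset_closedBall)

end Centers

section BallHull

variable {E : Type*} [NormedAddCommGroup E]

lemma notMem_ballHull_iff {S : Set E} {x : E} :
    x ∉ ballHull S ↔ ∃ y, S ⊆ closedBall y 1 ∧ x ∉ closedBall y 1 := by
  simp only [ballHull, mem_iInter₂, mem_ofPred_eq, not_forall, exists_prop]

lemma isClosed_ballHull (S : Set E) : IsClosed (ballHull S) :=
  isClosed_biInter fun _ _ => isClosed_closedBall

lemma IsBConvexBody.isCompact [ProperSpace E] {K : Set E} (hK : IsBConvexBody K) :
    IsCompact K :=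
  isCompact_of_isClosed_isBounded (hK.2.2 ▸ isClosed_ballHull K) hK.1

end BallHull

section NormedSpace

variable {E : Type*} [NormedAddCommGroup E] [NormedSpace ℝ E] {K : Set E} {x y : E} {r : ℝ}

lemma notMem_closedBall_lineMap {t : ℝ} (hx : x ∉ closedBall y r) (ht : 1 ≤ t) :
    x ∉ closedBall (AffineMap.lineMap x y t) r := by
  rw [mem_closedBall, not_le] at hx ⊢
  calc
    r < dist x y := hx
    _ ≤ t * dist x y := le_mul_of_one_le_left dist_nonneg ht
    _ = dist x (AffineMap.lineMap x y t) := by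
      rw [dist_left_lineMap, Real.norm_of_nonneg (zero_le_one.trans ht)]

lemma exists_one_le_lineMap_notMem_closedBall (hxy : x ≠ y) (p : E) (r : ℝ) :
    ∃ t : ℝ, 1 ≤ t ∧ p ∉ closedBall (AffineMap.lineMap x y t) r := by
  have dist_xy_pos : 0 < dist x y := dist_pos.2 hxy
  obtain ⟨t, one_le_t, ht⟩ :=
    ((Filter.eventually_ge_atTop (1 : ℝ)).and
      ((Filter.tendsto_id.atTop_mul_const dist_xy_pos).eventually_gt_atTop (dist x p + r))).exists
  refine ⟨t, one_le_t, fun hp => ht.not_ge ?_⟩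
  calc
    t * dist x y = dist x (AffineMap.lineMap x y t) := by
      rw [dist_left_lineMap, Real.norm_of_nonneg (zero_le_one.trans one_le_t)]
    _ ≤ dist x p + dist p (AffineMap.lineMap x y t) := dist_triangle _ _ _
    _ ≤ dist x p + r := by gcongr; exact hp

lemma exists_touching_closedBall_notMem (hK : IsCompact K) (hne : K.Nonempty)
    (hy : K ⊆ closedBall y r) (hx : x ∉ closedBall y r) :
    ∃ z, K ⊆ closedBall z r ∧ (K ∩ sphere z r).Nonempty ∧ x ∉ closedBall z r := by
  obtain ⟨p, hp⟩ := hne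
  have x_ne_y : x ≠ y := by
    rintro rfl
    exact hx (mem_closedBall_self (dist_nonneg.trans (hy hp)))
  obtain ⟨s, one_le_s, p_notMem⟩ := exists_one_le_lineMap_notMem_closedBall x_ne_y p r
  have isPreconnected_ray : IsPreconnected (AffineMap.lineMap x y '' Ici (1 : ℝ)) :=
    isPreconnected_Ici.image _ AffineMap.lineMap_continuous.continuousOn
  obtain ⟨_, ⟨t, one_le_t, rfl⟩, K_subset, touches⟩ :=
    exists_touching_closedBall_of_isPreconnected isPreconnected_ray hK
      ⟨1, self_mem_Ici, AffineMap.lineMap_apply_one x y⟩ hy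
      (mem_image_of_mem _ one_le_s) fun K_subset => p_notMem (K_subset hp)
  exact ⟨_, K_subset, touches, notMem_closedBall_lineMap hx one_le_t⟩

theorem stmt_3_general (hK : IsCompact K) (hne : K.Nonempty) (hx : x ∉ ballHull K) :
    ∃ y : E, K ⊆ closedBall y 1 ∧ (K ∩ sphere y 1).Nonempty ∧ x ∉ closedBall y 1 :=
  let ⟨_, K_subset, x_notMem⟩ := notMem_ballHull_iff.1 hx
  exists_touching_closedBall_notMem hK hne K_subset x_notMem

end NormedSpace

theorem stmt_3 {E : Type*} [NormedAddCommGroup E] [NormedSpace ℝ E]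
    [FiniteDimensional ℝ E] [Nontrivial E]
    (K : Set E) (hK : IsBConvexBody K) (x₀ : E) (hx₀ : x₀ ∉ K) :
    ∃ y₀ : E, K ⊆ closedBall y₀ 1 ∧ (K ∩ sphere y₀ 1).Nonempty ∧
      x₀ ∉ closedBall y₀ 1 := by
  exact stmt_3_general hK.isCompact hK.2.1 (hK.2.2.symm ▸ hx₀)
end

section
/- A Minkowski space has strictly convex norm if and only if for every x and every r ∈ (0,1), each supporting sphere of the ball B(x,r) meets B(x,r) in exactly one point; i.e., whenever B(x,r) ⊆ B(y,1) and B(x,r) ∩ S(y,1) ≠ ∅, the intersection B(x,r) ∩ S(y,1) is a singleton. -/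
open Metric Set

/-!
If a closed ball of radius `r < R` and center `x` lies in the closed ball of radius `R` and
center `y`, and touches its sphere, then `dist x y = R - r`. At a contact point `z` the triangle
inequality `dist y z ≤ dist y x + dist x z` is an equality, so in a strictly convex space `x` lies
on the segment from `y` to `z`, at a position that depends only on `r` and `R`; hence `z` is
determined by `x` and `y`.

Conversely, if `a ≠ b` are unit vectors with `‖a + b‖ = 2`, then the norm is additive on the cone
they span, so the ball of radius `r` around `(1 - r) • midpoint a b` lies in the unit ball and
touches the unit sphere at the two points obtained by moving the center by `r • a` and `r • b`.
-/

section Seminormed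

variable {E P : Type*} [SeminormedAddCommGroup E] [NormedSpace ℝ E] [PseudoMetricSpace P]

theorem exists_dist_eq_and_dist_eq_add_s10 [NormedAddTorsor E P] {x y : P} {r : ℝ} (hr : 0 ≤ r)
    (hxy : 0 < dist x y) :
    ∃ p : P, dist p x = r ∧ dist p y = r + dist x y := by
  refine ⟨AffineMap.lineMap y x (1 + r / dist x y), ?_, ?_⟩
  · rw [dist_lineMap_right, sub_add_cancel_left, norm_neg, Real.norm_of_nonneg (by positivity),
      dist_comm y x, div_mul_cancel₀ _ hxy.ne']
  · rw [dist_lineMap_left, Real.norm_of_nonneg (by positivity), dist_comm y x, add_mul, one_mul,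
      div_mul_cancel₀ _ hxy.ne', add_comm]

theorem closedBall_subset_closedBall_iff_add_dist_le [NormedAddTorsor E P] {x y : P} {r R : ℝ}
    (hr : 0 ≤ r) (hrR : r ≤ R) : closedBall x r ⊆ closedBall y R ↔ r + dist x y ≤ R := by
  refine ⟨fun hsub => ?_, closedBall_subset_closedBall'⟩
  rcases (dist_nonneg (x := x) (y := y)).eq_or_lt' with hxy | hxy
  · rwa [hxy, add_zero]
  · obtain ⟨p, hpx, hpy⟩ := exists_dist_eq_and_dist_eq_add_s10 hr hxy
    exact hpy ▸ hsub (mem_closedBall.2 hpx.le)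

theorem norm_smul_add_smul_of_norm_add_eq {a b : E} (hab : ‖a + b‖ = ‖a‖ + ‖b‖) {s t : ℝ}
    (hs : 0 ≤ s) (ht : 0 ≤ t) : ‖s • a + t • b‖ = s * ‖a‖ + t * ‖b‖ := by
  wlog hst : s ≤ t generalizing a b s t
  · rw [add_comm, this (by rw [add_comm, hab, add_comm]) ht hs (le_of_not_ge hst), add_comm]
  have hupper : ‖s • a + t • b‖ ≤ s * ‖a‖ + t * ‖b‖ := by
    simpa only [norm_smul_of_nonneg hs, norm_smul_of_nonneg ht] using norm_add_le (s • a) (t • b)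
  have hlower : t * (‖a‖ + ‖b‖) ≤ ‖s • a + t • b‖ + (t - s) * ‖a‖ := calc
    t * (‖a‖ + ‖b‖) = ‖(s • a + t • b) + (t - s) • a‖ := by
      rw [← hab, ← norm_smul_of_nonneg ht]
      congr 1
      module
    _ ≤ ‖s • a + t • b‖ + (t - s) * ‖a‖ := by
      rw [← norm_smul_of_nonneg (sub_nonneg.2 hst)]
      exact norm_add_le _ _
  linarith

theorem add_smul_mem_closedBall_inter_sphere {a b : E} (ha : ‖a‖ = 1) (hb : ‖b‖ = 1)
    (hab : ‖a + b‖ = 2) {r : ℝ} (hr₀ : 0 ≤ r) (hr₁ : r ≤ 1) :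
    ((1 - r) / 2) • (a + b) + r • a ∈
      closedBall (((1 - r) / 2) • (a + b)) r ∩ sphere (0 : E) 1 := by
  refine ⟨?_, ?_⟩
  · rw [mem_closedBall_iff_norm, add_sub_cancel_left, norm_smul_of_nonneg hr₀, ha, mul_one]
  · have hadd : ‖a + b‖ = ‖a‖ + ‖b‖ := by rw [hab, ha, hb, one_add_one_eq_two]
    have hcombo : ((1 - r) / 2) • (a + b) + r • a = ((1 + r) / 2) • a + ((1 - r) / 2) • b := by
      module
    rw [mem_sphere_zero_iff_norm, hcombo,
      norm_smul_add_smul_of_norm_add_eq hadd (by linarith) (by linarith), ha, hb]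
    ring

end Seminormed

section StrictConvex

variable {E P : Type*} [NormedAddCommGroup E] [NormedSpace ℝ E] [StrictConvexSpace ℝ E]
  [MetricSpace P]

theorem homothety_eq_center_of_mem_closedBall_inter_sphere [NormedAddTorsor E P] {x y z : P}
    {r R : ℝ} (hR : 0 < R) (hadd : r + dist x y ≤ R)
    (hz : z ∈ closedBall x r ∩ sphere y R) :
    AffineMap.homothety y ((R - r) / R) z = x := by
  obtain ⟨hzx : dist z x ≤ r, hzy : dist z y = R⟩ := hz
  have htri : dist z y ≤ dist z x + dist x y := dist_triangle z x y
  rw [AffineMap.homothety_eq_lineMap]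
  refine (eq_lineMap_of_dist_eq_mul_of_dist_eq_mul ?_ ?_).symm
  · rw [dist_comm y z, hzy, div_mul_cancel₀ _ hR.ne', dist_comm]
    linarith
  · rw [dist_comm y z, hzy, sub_mul, div_mul_cancel₀ _ hR.ne', dist_comm]
    linarith

theorem subsingleton_closedBall_inter_sphere_of_subset [NormedAddTorsor E P] {x y : P}
    {r R : ℝ} (hrR : r < R) (hsub : closedBall x r ⊆ closedBall y R) :
    (closedBall x r ∩ sphere y R).Subsingleton := by
  intro p hp q hq
  have hr : 0 ≤ r := dist_nonneg.trans hp.1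
  have hR : 0 < R := hr.trans_lt hrR
  have hadd : r + dist x y ≤ R :=
    (closedBall_subset_closedBall_iff_add_dist_le hr hrR.le).1 hsub
  have hratio : (R - r) / R ≠ 0 := (div_pos (sub_pos.2 hrR) hR).ne'
  exact AffineMap.homothety_injective y hratio <|
    (homothety_eq_center_of_mem_closedBall_inter_sphere hR hadd hp).trans
      (homothety_eq_center_of_mem_closedBall_inter_sphere hR hadd hq).symm

end StrictConvex

section Normed

variable {E : Type*} [NormedAddCommGroup E] [NormedSpace ℝ E]

theorem strictConvexSpace_of_subsingleton_closedBall_inter_sphere {r : ℝ} (hr₀ : 0 < r)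
    (hr₁ : r ≤ 1)
    (h : ∀ x : E, closedBall x r ⊆ closedBall 0 1 →
      (closedBall x r ∩ sphere 0 1).Subsingleton) :
    StrictConvexSpace ℝ E := by
  refine StrictConvexSpace.of_norm_add_ne_two fun a b ha hb hne hab => hne ?_
  have hsub : closedBall (((1 - r) / 2) • (a + b)) r ⊆ closedBall (0 : E) 1 := by
    apply closedBall_subset_closedBall'
    rw [dist_zero_right, norm_smul_of_nonneg (by linarith), hab]
    linarith
  have hmem_a := add_smul_mem_closedBall_inter_sphere ha hb hab hr₀.le hr₁
  have hmem_b := add_smul_mem_closedBall_inter_sphere hb ha (add_comm a b ▸ hab) hr₀.le hr₁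
  rw [add_comm b a] at hmem_b
  exact smul_right_injective E hr₀.ne' (add_left_cancel (h _ hsub hmem_a hmem_b))

theorem stmt_10_general :
    StrictConvexSpace ℝ E ↔
      ∀ x : E, ∀ r ∈ Set.Ioo (0 : ℝ) 1, ∀ y : E,
        closedBall x r ⊆ closedBall y 1 → (closedBall x r ∩ sphere y 1).Nonempty →
          ∃ z : E, closedBall x r ∩ sphere y 1 = {z} := by
  simp only [exists_eq_singleton_iff_nonempty_subsingleton]
  constructor
  · intro _ x r hr y hsub hne
    exact ⟨hne, subsingleton_closedBall_inter_sphere_of_subset hr.2 hsub⟩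
  · intro h
    refine strictConvexSpace_of_subsingleton_closedBall_inter_sphere one_half_pos
      one_half_lt_one.le fun x hsub => ?_
    rcases (closedBall x (1 / 2) ∩ sphere 0 1).eq_empty_or_nonempty with hempty | hne
    · exact hempty ▸ subsingleton_empty
    · exact (h x (1 / 2) ⟨one_half_pos, one_half_lt_one⟩ 0 hsub hne).2

end Normed

theorem stmt_10 {E : Type*} [NormedAddCommGroup E] [NormedSpace ℝ E]
    [FiniteDimensional ℝ E] [Nontrivial E] :
    StrictConvexSpace ℝ E ↔
      ∀ x : E, ∀ r ∈ Set.Ioo (0 : ℝ) 1, ∀ y : E,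
        closedBall x r ⊆ closedBall y 1 → (closedBall x r ∩ sphere y 1).Nonempty →
          ∃ z : E, closedBall x r ∩ sphere y 1 = {z} :=
  stmt_10_general
end

section
/- A Minkowski space has strictly convex norm if and only if every b-convex body that contains at least two points has nonempty interior. -/
open Metric Set

/-!
The centers of the unit balls containing `S` form a closed set. In a proper space, if they all lie
in the open unit ball around `p`, then by compactness they lie in a smaller concentric ball, so `p`
is interior to `ballHull S`. In a strictly convex space this applies to every point strictly between
two points of `ballHull S`.

Conversely, if distinct unit vectors `u`, `v` satisfy `‖u + v‖ = 2`, then the unit balls around `0`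
and `u + v` have disjoint interiors, so their intersection is a b-convex body with empty interior,
although it contains both `u` and `v`.
-/

section PseudoMetricSpace

variable {α : Type*} [PseudoMetricSpace α]

theorem isClosed_setOf_subset_closedBall_s11 (S : Set α) (r : ℝ) :
    IsClosed {x | S ⊆ closedBall x r} := by
  simp only [subset_def, mem_closedBall, ofPred_forall]
  exact isClosed_biInter fun y _ => isClosed_le (by fun_prop) continuous_const

theorem mem_interior_biInter_closedBall [ProperSpace α] {C : Set α} {p : α} {r : ℝ}
    (hC : IsClosed C) (hp : ∀ x ∈ C, p ∈ ball x r) :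
    p ∈ interior (⋂ x ∈ C, closedBall x r) := by
  obtain ⟨r', hr', hCr'⟩ : ∃ r' < r, C ⊆ ball p r' :=
    exists_lt_subset_ball hC fun x hx => mem_ball_comm.1 (hp x hx)
  refine interior_maximal (subset_iInter₂ fun x hx => ?_) isOpen_ball
    (mem_ball_self (sub_pos.2 hr'))
  have hpx : dist p x < r' := mem_ball'.1 (hCr' hx)
  exact ball_subset_closedBall.trans (closedBall_subset_closedBall' (by linarith))

end PseudoMetricSpace

section NormedAddCommGroup

variable {E : Type*} [NormedAddCommGroup E]

theorem ballHull_biInter_closedBall (C : Set E) :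
    ballHull (⋂ x ∈ C, closedBall x 1) = ⋂ x ∈ C, closedBall x 1 :=
  Subset.antisymm (biInter_subset_biInter_left fun _ => biInter_subset_of_mem)
    (subset_iInter₂ fun _ => id)

theorem isBConvexBody_closedBall_inter_closedBall {x y : E}
    (h : (closedBall x 1 ∩ closedBall y 1).Nonempty) :
    IsBConvexBody (closedBall x 1 ∩ closedBall y 1) :=
  ⟨isBounded_closedBall.subset inter_subset_left, h, by
    simpa only [biInter_pair] using ballHull_biInter_closedBall {x, y}⟩

variable [NormedSpace ℝ E]

theorem strictConvex_ballHull [StrictConvexSpace ℝ E] [ProperSpace E] (S : Set E) :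
    StrictConvex ℝ (ballHull S) := by
  intro p hp q hq hpq a b ha hb hab
  refine mem_interior_biInter_closedBall (isClosed_setOf_subset_closedBall_s11 S 1) fun x hx => ?_
  exact combo_mem_ball_of_ne (mem_iInter₂.1 hp x hx) (mem_iInter₂.1 hq x hx) hpq ha hb hab

theorem interior_closedBall_inter_closedBall_eq_empty [Nontrivial E] {x y : E} {r s : ℝ}
    (h : r + s ≤ dist x y) : interior (closedBall x r ∩ closedBall y s) = ∅ := by
  rw [interior_inter, interior_closedBall', interior_closedBall', (ball_disjoint_ball h).inter_eq]

end NormedAddCommGroup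

theorem stmt_11 {E : Type*} [NormedAddCommGroup E] [NormedSpace ℝ E]
    [FiniteDimensional ℝ E] [Nontrivial E] :
    StrictConvexSpace ℝ E ↔
      ∀ K : Set E, IsBConvexBody K → (∃ a ∈ K, ∃ b ∈ K, a ≠ b) →
        (interior K).Nonempty := by
  constructor
  · rintro _ K ⟨_, _, hK⟩ ⟨a, ha, b, hb, hab⟩
    have hK_strict : StrictConvex ℝ K := hK ▸ strictConvex_ballHull K
    exact ⟨_, hK_strict ha hb hab one_half_pos one_half_pos (add_halves 1)⟩
  · intro h
    refine StrictConvexSpace.of_norm_add_ne_two fun u v hu hv huv hadd => ?_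
    have hu_mem : u ∈ closedBall 0 1 ∩ closedBall (u + v) 1 := by
      simp [dist_eq_norm, hu, hv]
    have hv_mem : v ∈ closedBall 0 1 ∩ closedBall (u + v) 1 := by
      simp [dist_eq_norm, hu, hv]
    have hdist : 1 + 1 ≤ dist 0 (u + v) := by rw [dist_zero_left, hadd, one_add_one_eq_two]
    refine (h _ (isBConvexBody_closedBall_inter_closedBall ⟨u, hu_mem⟩)
      ⟨u, hu_mem, v, hv_mem, huv⟩).ne_empty ?_
    exact interior_closedBall_inter_closedBall_eq_empty hdist
end

section
/- Let K be a nonempty compact convex subset of a finite-dimensional real normed vector space, let H be an affine hyperplane, and let (yᵢ) be a sequence converging to y₀ such that H ∩ (K + yᵢ) ≠ ∅ for all i. Then H ∩ (K + y₀) ≠ ∅ and the sets H ∩ (K + yᵢ) converge to H ∩ (K + y₀) in the Hausdorff distance. -/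
open Metric Set Filter
open scoped Topology

/-!
Hausdorff convergence to a compact set is Vietoris convergence, so it suffices that
`y ↦ f ⁻¹' {c} ∩ (K + y)` is upper hemicontinuous, and lower hemicontinuous where it is nonempty.
The former holds because `K` is compact and the hyperplane is closed; it also makes the domain
closed, which yields the nonempty limit section. The latter holds because a linear functional on a
convex set `K` is relatively open onto its image: a segment of `K` from `x` to a point with another
value carries a continuous section of `f` through `x`.
-/

theorem tendsto_hausdorffEDist_of_hemicontinuousWithinAt {α X : Type*} [TopologicalSpace α]
    [PseudoEMetricSpace X] {F : α → Set X} {s : Set α} {a : α}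
    (hupper : UpperHemicontinuousWithinAt F s a) (hlower : LowerHemicontinuousWithinAt F s a)
    (hcompact : IsCompact (F a)) :
    Tendsto (fun b ↦ hausdorffEDist (F b) (F a)) (𝓝[s] a) (𝓝 0) := by
  let : PseudoEMetricSpace (Set X) := .hausdorff
  suffices Tendsto F (𝓝[s] a) (𝓝 (F a)) from tendsto_iff_edist_tendsto_0.1 this
  rw [hcompact.nhds_hausdorff_eq_nhds_vietoris, TopologicalSpace.tendsto_nhds_generateFrom_iff]
  rintro _ (⟨U, hU, rfl⟩ | ⟨U, hU, rfl⟩) hFa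
  · exact hupper.forall_isOpen U hU hFa
  · exact lowerHemicontinuousWithinAt_iff.1 hlower U hU hFa

theorem upperHemicontinuous_image {α X Y : Type*} [TopologicalSpace α] [TopologicalSpace X]
    [TopologicalSpace Y] {K : Set X} (hK : IsCompact K) {g : α → X → Y}
    (hg : Continuous fun p : α × X ↦ g p.1 p.2) : UpperHemicontinuous fun a ↦ g a '' K := by
  refine .of_forall_isOpen fun a U hU hKU ↦ ?_
  simp only [image_subset_iff] at hKU ⊢
  exact hK.eventually_forall_of_forall_eventually fun x hx ↦
    hg.continuousAt.eventually_mem (hU.mem_nhds (hKU hx))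

theorem upperHemicontinuous_inter_image_add {E : Type*} [TopologicalSpace E] [Add E]
    [ContinuousAdd E] {C K : Set E} (hC : IsClosed C) (hK : IsCompact K) :
    UpperHemicontinuous fun y ↦ C ∩ (· + y) '' K := by
  simpa only [inter_comm C] using
    (upperHemicontinuous_image hK (g := fun y x ↦ x + y) (by fun_prop)).inter hC

theorem mem_nhdsWithin_inter_Ici {α : Type*} [LinearOrder α] [TopologicalSpace α] {A I : Set α}
    {a : α} (ha : a ∈ A) (hA : ∀ b ∈ I, a < b → A ∈ 𝓝[≥] a) : A ∈ 𝓝[I ∩ Ici a] a := by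
  by_cases h : ∃ b ∈ I, a < b
  · obtain ⟨b, hb, hab⟩ := h
    exact nhdsWithin_mono a inter_subset_right (hA b hb hab)
  · push Not at h
    exact mem_of_superset self_mem_nhdsWithin fun b ⟨hb, hab⟩ ↦ hab.antisymm (h b hb) ▸ ha

theorem mem_nhdsWithin_of_forall_mem_nhdsWithin_uIcc {α : Type*} [LinearOrder α]
    [TopologicalSpace α] [OrderClosedTopology α] {A I : Set α} {a : α} (ha : a ∈ A)
    (hA : ∀ b ∈ I, b ≠ a → A ∈ 𝓝[uIcc a b] a) : A ∈ 𝓝[I] a := by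
  have hleft : A ∈ 𝓝[I ∩ Iic a] a := by
    refine mem_nhdsWithin_inter_Ici (α := αᵒᵈ) (I := OrderDual.ofDual ⁻¹' I)
      (A := OrderDual.ofDual ⁻¹' A) (a := OrderDual.toDual a) ha fun b hb hba ↦ ?_
    change OrderDual.ofDual b < a at hba
    change A ∈ 𝓝[≤] a
    simpa only [uIcc_of_ge hba.le, nhdsWithin_Icc_eq_nhdsLE hba] using
      hA (OrderDual.ofDual b) hb hba.ne
  have hright : A ∈ 𝓝[I ∩ Ici a] a :=
    mem_nhdsWithin_inter_Ici ha fun b hb hab ↦ by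
      simpa only [uIcc_of_le hab.le, nhdsWithin_Icc_eq_nhdsGE hab] using hA b hb hab.ne'
  rw [← inter_univ I, ← Iic_union_Ici (a := a), inter_union_distrib_left, nhdsWithin_union]
  exact ⟨hleft, hright⟩

section TopologicalVectorSpace

variable {E : Type*} [AddCommGroup E] [Module ℝ E] [TopologicalSpace E] [ContinuousAdd E]
  [ContinuousSMul ℝ E] {K U : Set E} {x p : E}

theorem image_inter_mem_nhdsWithin_uIcc (hK : Convex ℝ K) (f : E →ₗ[ℝ] ℝ) (hx : x ∈ K)
    (hp : p ∈ K) (hfp : f p ≠ f x) (hU : U ∈ 𝓝 x) : f '' (K ∩ U) ∈ 𝓝[uIcc (f x) (f p)] (f x) := by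
  let r : ℝ → ℝ := fun t ↦ (t - f x) / (f p - f x)
  let γ : ℝ → E := fun t ↦ x + r t • (p - x)
  have hγ : Continuous γ := by fun_prop
  have hγx : γ (f x) = x := by simp [γ, r]
  have hfγ (t : ℝ) : f (γ t) = t := by
    simp [γ, r, div_mul_cancel₀ _ (sub_ne_zero.2 hfp)]
  have hγK {t : ℝ} (ht : t ∈ uIcc (f x) (f p)) : γ t ∈ K := by
    rw [← segment_eq_uIcc, segment_eq_image'] at ht
    obtain ⟨θ, hθ, rfl⟩ := ht
    have hrθ : r (f x + θ • (f p - f x)) = θ := by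
      simp [r, mul_div_cancel_right₀ _ (sub_ne_zero.2 hfp)]
    simpa only [γ, hrθ] using hK.add_smul_sub_mem hx hp hθ
  have hγU : ∀ᶠ t in 𝓝 (f x), γ t ∈ U := hγ.continuousAt (by rwa [hγx])
  filter_upwards [self_mem_nhdsWithin, nhdsWithin_le_nhds hγU] with t htK htU
  exact ⟨γ t, ⟨hγK htK, htU⟩, hfγ t⟩

theorem image_inter_mem_nhdsWithin_image (hK : Convex ℝ K) (f : E →ₗ[ℝ] ℝ) (hx : x ∈ K)
    (hU : U ∈ 𝓝 x) : f '' (K ∩ U) ∈ 𝓝[f '' K] (f x) := by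
  refine mem_nhdsWithin_of_forall_mem_nhdsWithin_uIcc
    (mem_image_of_mem f ⟨hx, mem_of_mem_nhds hU⟩) ?_
  rintro _ ⟨p, hp, rfl⟩ hfp
  exact image_inter_mem_nhdsWithin_uIcc hK f hx hp hfp hU

theorem lowerHemicontinuousOn_preimage_inter_image_add (hK : Convex ℝ K) (f : E →L[ℝ] ℝ) (c : ℝ) :
    LowerHemicontinuousOn (fun y ↦ f ⁻¹' {c} ∩ (· + y) '' K)
      {y | (f ⁻¹' {c} ∩ (· + y) '' K).Nonempty} := by
  refine lowerHemicontinuousOn_iff.2 fun y₀ _ ↦ lowerHemicontinuousWithinAt_iff.2 fun U hU ↦ ?_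
  rintro ⟨_, ⟨hc, k, hk, rfl⟩, hkU⟩
  have mem_preimage_iff (x y : E) : x + y ∈ f ⁻¹' {c} ↔ f x = c - f y := by
    rw [mem_preimage, mem_singleton_iff, map_add, eq_sub_iff_add_eq]
  have hadd : ∀ᶠ q : E × E in 𝓝 k ×ˢ 𝓝 y₀, q.1 + q.2 ∈ U :=
    (tendsto_fst.add tendsto_snd).eventually_mem (hU.mem_nhds hkU)
  obtain ⟨V, hV, W, hW, hVW⟩ := eventually_prod_iff.1 hadd
  have hvalue : Tendsto (fun y ↦ c - f y) (𝓝[{y | (f ⁻¹' {c} ∩ (· + y) '' K).Nonempty}] y₀)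
      (𝓝[f '' K] (f k)) := by
    rw [(mem_preimage_iff k y₀).1 hc]
    refine tendsto_nhdsWithin_iff.2 ⟨?_, ?_⟩
    · exact (continuous_const.sub f.continuous).continuousAt.mono_left nhdsWithin_le_nhds
    · filter_upwards [self_mem_nhdsWithin]
      rintro y ⟨_, hx, x, hxK, rfl⟩
      exact ⟨x, hxK, (mem_preimage_iff x y).1 hx⟩
  filter_upwards [hvalue (image_inter_mem_nhdsWithin_image hK (f : E →ₗ[ℝ] ℝ) hk hV),
    nhdsWithin_le_nhds hW]
  rintro y ⟨x, ⟨hxK, hxV⟩, hfx⟩ hyW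
  exact ⟨x + y, ⟨(mem_preimage_iff x y).2 hfx, x, hxK, rfl⟩, hVW hxV hyW⟩

end TopologicalVectorSpace

theorem stmt_12_general {E ι : Type*} [SeminormedAddCommGroup E] [NormedSpace ℝ E] {l : Filter ι}
    [l.NeBot] {K : Set E} (hKc : IsCompact K) (hKconv : Convex ℝ K) (f : E →L[ℝ] ℝ) (c : ℝ)
    {y : ι → E} {y₀ : E} (hy : Tendsto y l (𝓝 y₀))
    (hne : ∀ᶠ i in l, (f ⁻¹' {c} ∩ (· + y i) '' K).Nonempty) :
    (f ⁻¹' {c} ∩ (· + y₀) '' K).Nonempty ∧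
      Tendsto (fun i ↦ hausdorffEDist (f ⁻¹' {c} ∩ (· + y i) '' K) (f ⁻¹' {c} ∩ (· + y₀) '' K))
        l (𝓝 0) := by
  have hclosed : IsClosed (f ⁻¹' {c}) := isClosed_singleton.preimage f.continuous
  have hupper := upperHemicontinuous_inter_image_add hclosed hKc
  have hne₀ : (f ⁻¹' {c} ∩ (· + y₀) '' K).Nonempty := hupper.isClosed_domain.mem_of_tendsto hy hne
  have hlower := lowerHemicontinuousOn_preimage_inter_image_add hKconv f c y₀ hne₀
  have hcompact := (hKc.image (continuous_add_const y₀)).inter_left hclosed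
  exact ⟨hne₀, (tendsto_hausdorffEDist_of_hemicontinuousWithinAt
    (hupper.upperHemicontinuousWithinAt _ _) hlower hcompact).comp
      (tendsto_nhdsWithin_iff.2 ⟨hy, hne⟩)⟩

theorem stmt_12 {E : Type*} [NormedAddCommGroup E] [NormedSpace ℝ E]
    [FiniteDimensional ℝ E]
    (K : Set E) (hKne : K.Nonempty) (hKc : IsCompact K) (hKconv : Convex ℝ K)
    (f : E →L[ℝ] ℝ) (hf : f ≠ 0) (c : ℝ)
    (H : Set E) (hH : H = f ⁻¹' {c})
    (y : ℕ → E) (y₀ : E) (hy : Tendsto y atTop (nhds y₀))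
    (hne : ∀ i : ℕ, (H ∩ ((· + y i) '' K)).Nonempty) :
    (H ∩ ((· + y₀) '' K)).Nonempty ∧
      Tendsto (fun i : ℕ =>
          hausdorffDist (H ∩ ((· + y i) '' K)) (H ∩ ((· + y₀) '' K)))
        atTop (nhds 0) := by
  subst hH
  exact (stmt_12_general hKc hKconv f c hy (.of_forall hne)).imp_right
    (ENNReal.tendsto_toReal ENNReal.zero_ne_top).comp
end

section
/- Let C₁ ⊆ C₂ ⊆ … be an increasing sequence of b-convex bodies in a Minkowski space of dimension n such that the dimension of the affine hull of bh₁(⋃ᵢ Cᵢ) belongs to {0, 1, n−1, n}. Then cl(⋃ᵢ Cᵢ) = bh₁(⋃ᵢ Cᵢ); in particular, cl(⋃ᵢ Cᵢ) is a b-convex body. -/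
open Metric Set

/-!
If the ball hull is at most one-dimensional, each of its points outside the closed convex set
`cl (⋃ Cᵢ)` can be cut off from that set by a unit ball, since the set is a segment of length at
most 2 on the line containing the hull.

If the ball hull `K` has codimension at most one, it suffices that `⋃ Cᵢ` contains the relative
interior of `K`. A relatively interior point `p` missing from all `Cᵢ` is cut off from each `Cᵢ` by
a unit ball. Let `a` be a cluster point of the centres of these balls. The unit ball around `a`
contains `K` and has `p` on its boundary, so it is flat near `p`. Hence `p` is a point of `K`
nearest to `y` for every `y` close to `a`, and no ball centred at such a `y` can separate `p` from
a `Cᵢ`.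
-/

section IntrinsicInterior

open Filter Topology

theorem mem_intrinsicInterior_iff_mem_nhdsWithin {𝕜 V P : Type*} [Ring 𝕜]
    [AddCommGroup V] [Module 𝕜 V] [TopologicalSpace P] [AddTorsor V P] {s : Set P} {p : P} :
    p ∈ intrinsicInterior 𝕜 s ↔ p ∈ affineSpan 𝕜 s ∧ s ∈ 𝓝[affineSpan 𝕜 s] p := by
  simp only [mem_intrinsicInterior, mem_interior_iff_mem_nhds]
  constructor
  · rintro ⟨y, hy, rfl⟩
    exact ⟨y.2, preimage_coe_mem_nhds_subtype.1 hy⟩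
  · rintro ⟨hp, hs⟩
    exact ⟨⟨p, hp⟩, preimage_coe_mem_nhds_subtype.2 hs, rfl⟩

section TopologicalVectorSpace

variable {E : Type*} [AddCommGroup E] [Module ℝ E] [TopologicalSpace E] [IsTopologicalAddGroup E]
  [ContinuousSMul ℝ E] {s : Set E} {p q : E}

theorem openSegment_subset_intrinsicInterior (hs : Convex ℝ s) (hq : q ∈ s)
    (hp : p ∈ intrinsicInterior ℝ s) : openSegment ℝ q p ⊆ intrinsicInterior ℝ s := by
  obtain ⟨hp_span, hp_nhds⟩ := mem_intrinsicInterior_iff_mem_nhdsWithin.1 hp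
  have hq_span : q ∈ affineSpan ℝ s := subset_affineSpan ℝ s hq
  rw [openSegment_eq_image_lineMap]
  rintro _ ⟨t, ⟨ht_pos, ht_lt⟩, rfl⟩
  set z := AffineMap.lineMap q p t
  set φ := AffineMap.homothety q t⁻¹
  have hφ_inv (y : E) : AffineMap.lineMap q (φ y) t = y := by
    rw [← AffineMap.homothety_eq_lineMap]
    exact (AffineMap.homothety_eq_iff_of_mul_eq_one (inv_mul_cancel₀ ht_pos.ne')).1 rfl
  have hφz : φ z = p := by
    rw [AffineMap.homothety_eq_iff_of_mul_eq_one (inv_mul_cancel₀ ht_pos.ne'),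
      AffineMap.homothety_eq_lineMap]
  have hφ_tendsto : Tendsto φ (𝓝[affineSpan ℝ s] z) (𝓝[affineSpan ℝ s] p) := by
    rw [← hφz]
    refine (AffineMap.homothety_continuous q t⁻¹).continuousWithinAt.tendsto_nhdsWithin ?_
    intro y hy
    rw [AffineMap.homothety_eq_lineMap]
    exact AffineMap.lineMap_mem _ hq_span hy
  refine mem_intrinsicInterior_iff_mem_nhdsWithin.2 ⟨AffineMap.lineMap_mem t hq_span hp_span, ?_⟩
  filter_upwards [hφ_tendsto hp_nhds] with y hy
  rw [← hφ_inv y]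
  exact hs.lineMap_mem hq hy ⟨ht_pos.le, ht_lt.le⟩

theorem subset_closure_intrinsicInterior (hs : Convex ℝ s)
    (hne : (intrinsicInterior ℝ s).Nonempty) : s ⊆ closure (intrinsicInterior ℝ s) := by
  obtain ⟨p, hp⟩ := hne
  intro q hq
  exact closure_mono (openSegment_subset_intrinsicInterior hs hq hp)
    (segment_subset_closure_openSegment (left_mem_segment ℝ q p))

theorem direction_affineSpan_le_ker_of_isMaxOn {f : E →ₗ[ℝ] ℝ}
    (hp : p ∈ intrinsicInterior ℝ s) (hf : IsMaxOn f s p) :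
    (affineSpan ℝ s).direction ≤ LinearMap.ker f := by
  obtain ⟨hp_span, hp_nhds⟩ := mem_intrinsicInterior_iff_mem_nhdsWithin.1 hp
  intro v hv
  have hline : Tendsto (fun t : ℝ => p + t • v) (𝓝 0) (𝓝[affineSpan ℝ s] p) := by
    refine tendsto_nhdsWithin_iff.2 ⟨?_, Eventually.of_forall fun t => ?_⟩
    · exact Continuous.tendsto' (by fun_prop) _ _ (by simp)
    · rw [add_comm]
      exact AffineSubspace.vadd_mem_of_mem_direction (Submodule.smul_mem _ t hv) hp_span
  have hmax : IsLocalMax (fun t : ℝ => f p + t * f v) 0 := by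
    filter_upwards [hline hp_nhds] with t ht
    simpa using hf ht
  have hderiv : HasDerivAt (fun t : ℝ => f p + t * f v) (f v) 0 := by
    simpa using ((hasDerivAt_id (0 : ℝ)).mul_const (f v)).const_add (f p)
  exact hmax.hasDerivAt_eq_zero hderiv

end TopologicalVectorSpace

variable {E : Type*} [NormedAddCommGroup E] [NormedSpace ℝ E] {s : Set E} {a p : E}

theorem eventually_dist_le_apply_sub {f : StrongDual ℝ E} (hp : p ∈ intrinsicInterior ℝ s)
    (hmax : IsMaxOn (dist · a) s p) (hpa : p ≠ a) (hf : f (p - a) = ‖p - a‖)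
    (hker : LinearMap.ker f.toLinearMap ≤ (affineSpan ℝ s).direction) :
    ∀ᶠ y in 𝓝 a, dist p y ≤ f (p - y) := by
  obtain ⟨hp_span, hp_nhds⟩ := mem_intrinsicInterior_iff_mem_nhdsWithin.1 hp
  have hnorm_pos : 0 < ‖p - a‖ := norm_sub_pos_iff.2 hpa
  have hfpa_pos : 0 < f (p - a) := hf ▸ hnorm_pos
  have hf_cont : ContinuousAt (fun y => f (p - y)) a := by fun_prop
  have hf_pos : ∀ᶠ y in 𝓝 a, 0 < f (p - y) := hf_cont.eventually_const_lt hfpa_pos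
  -- Rescale `p - y` onto the level set of `f` through `p - a`.
  set g : E → E := fun y => a + (‖p - a‖ / f (p - y)) • (p - y)
  have hga : g a = p := by
    simp only [g]
    rw [hf, div_self hnorm_pos.ne', one_smul, add_sub_cancel]
  have hg_cont : ContinuousAt g a := by
    have hne : f (p - a) ≠ 0 := hfpa_pos.ne'
    fun_prop (disch := assumption)
  have hg_span : ∀ᶠ y in 𝓝 a, g y ∈ affineSpan ℝ s := by
    filter_upwards [hf_pos] with y hy
    refine (AffineSubspace.vsub_right_mem_direction_iff_mem hp_span (g y)).1 (hker ?_)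
    have hfg : f (g y - p) = 0 := by
      have hsub : g y - p = (‖p - a‖ / f (p - y)) • (p - y) - (p - a) := by simp only [g]; abel
      rw [hsub, map_sub, map_smul, smul_eq_mul, div_mul_cancel₀ _ hy.ne', hf, sub_self]
    exact hfg
  have hg_mem : ∀ᶠ y in 𝓝 a, g y ∈ s :=
    tendsto_nhdsWithin_iff.2 ⟨hga ▸ hg_cont.tendsto, hg_span⟩ hp_nhds
  filter_upwards [hf_pos, hg_mem] with y hy hgy
  have hle : ‖p - a‖ / f (p - y) * ‖p - y‖ ≤ ‖p - a‖ := by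
    have hdist : dist (g y) a ≤ dist p a := hmax hgy
    rwa [dist_eq_norm, dist_eq_norm, add_sub_cancel_left, norm_smul,
      Real.norm_of_nonneg (by positivity)] at hdist
  rw [div_mul_eq_mul_div, div_le_iff₀ hy] at hle
  exact (dist_eq_norm p y).trans_le (le_of_mul_le_mul_left hle hnorm_pos)

/-- As `p` is relatively interior, a functional `f` norming `p - a` is constant on `s`. By the bound
on the dimension, `s` is then a neighbourhood of `p` in the hyperplane `f = f p`, which supports
a ball around `a`. The ball is thus flat at `p`, and the norm coincides with `f` near `p - a`. -/
theorem eventually_forall_dist_le_dist_of_isMaxOn_dist [FiniteDimensional ℝ E]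
    (hp : p ∈ intrinsicInterior ℝ s) (hmax : IsMaxOn (dist · a) s p) (hpa : p ≠ a)
    (hdim : Module.finrank ℝ E ≤ Module.finrank ℝ (affineSpan ℝ s).direction + 1) :
    ∀ᶠ y in 𝓝 a, ∀ c ∈ s, dist p y ≤ dist c y := by
  have hnorm_ne : ‖p - a‖ ≠ 0 := norm_ne_zero_iff.2 (sub_ne_zero.2 hpa)
  obtain ⟨f, hf_norm, hf⟩ : ∃ f : StrongDual ℝ E, ‖f‖ = 1 ∧ f (p - a) = ‖p - a‖ :=
    exists_dual_vector ℝ (p - a) hnorm_ne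
  have hf_le (z : E) : f z ≤ ‖z‖ :=
    (Real.le_norm_self _).trans (by simpa [hf_norm] using f.le_opNorm z)
  have hf_max : IsMaxOn f.toLinearMap s p := fun c hc => by
    have hle : f (c - a) ≤ f (p - a) := calc
      f (c - a) ≤ dist c a := (hf_le _).trans_eq (dist_eq_norm c a).symm
      _ ≤ dist p a := hmax hc
      _ = f (p - a) := (dist_eq_norm p a).trans hf.symm
    simpa using hle
  have hf_ne : f.toLinearMap ≠ 0 := fun h =>
    hnorm_ne (hf.symm.trans (LinearMap.congr_fun h (p - a)))
  have hdirection_le := direction_affineSpan_le_ker_of_isMaxOn hp hf_max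
  have hdirection : (affineSpan ℝ s).direction = LinearMap.ker f.toLinearMap := by
    refine Submodule.eq_of_le_of_finrank_le hdirection_le ?_
    have := Module.Dual.finrank_ker_add_one_of_ne_zero hf_ne
    lia
  filter_upwards [eventually_dist_le_apply_sub hp hmax hpa hf hdirection.ge] with y hy c hc
  have hf_const : f (p - c) = 0 := hdirection_le <| AffineSubspace.vsub_mem_direction
    (subset_affineSpan ℝ s (intrinsicInterior_subset hp)) (subset_affineSpan ℝ s hc)
  calc
    dist p y ≤ f (p - y) := hy
    _ = f (c - y) := by simpa [sub_eq_zero] using hf_const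
    _ ≤ dist c y := (hf_le _).trans_eq (dist_eq_norm c y).symm

end IntrinsicInterior

section BallSeparation

variable {E : Type*} [NormedAddCommGroup E] [NormedSpace ℝ E] {s : Set E} {a p : E} {r : ℝ}

theorem wbtw_of_infDist_eq_dist {b c : E} (hs : Convex ℝ s) (hp : p ∉ s)
    (hb : b ∈ s) (hbp : infDist p s = dist p b) (hc : c ∈ s)
    (hcol : Collinear ℝ {c, b, p}) : Wbtw ℝ c b p := by
  rcases hcol.wbtw_or_wbtw_or_wbtw with h | h | h
  · exact h
  · exact absurd (hs.segment_subset hb hc h.mem_segment) hp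
  · have hmin : dist p b ≤ dist p c := hbp ▸ infDist_le_dist_of_mem hc
    have hcb : c = b := dist_le_zero.1 (by linarith [h.dist_add_dist])
    exact hcb ▸ wbtw_self_left ℝ c p

/-- The ball is centred at distance `r` behind the point of `s` nearest to `p`: all of `s` lies
within distance `2 * r` of that point on the far side from `p`. -/
theorem exists_subset_closedBall_notMem_of_collinear [ProperSpace E] (hclosed : IsClosed s)
    (hs : Convex ℝ s) (hne : s.Nonempty) (hsa : s ⊆ closedBall a r) (hp : p ∉ s)
    (hcol : Collinear ℝ (insert p s)) :
    ∃ y, s ⊆ closedBall y r ∧ p ∉ closedBall y r := by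
  obtain ⟨b, hb, hbp⟩ := hclosed.exists_infDist_eq_dist hne p
  have hr : 0 ≤ r := dist_nonneg.trans (hsa hb)
  have hpb_pos : 0 < ‖p - b‖ := norm_sub_pos_iff.2 (ne_of_mem_of_not_mem hb hp).symm
  set u := (r / ‖p - b‖) • (p - b) with hu
  have hu_norm : ‖u‖ = r := by
    rw [hu, norm_smul, Real.norm_of_nonneg (by positivity), div_mul_cancel₀ _ hpb_pos.ne']
  have hu_ray {v : E} (hv : SameRay ℝ v (p - b)) : SameRay ℝ v u :=
    hv.nonneg_smul_right (by positivity)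
  refine ⟨b - u, fun c hc => ?_, fun hpy => ?_⟩
  · have hcbp : Wbtw ℝ c b p := wbtw_of_infDist_eq_dist hs hp hb hbp hc
      (hcol.subset (by simp [insert_subset_iff, hb, hc]))
    have hcb : ‖b - c‖ ≤ 2 * r := by
      have hb' : dist b a ≤ r := hsa hb
      have hc' : dist c a ≤ r := hsa hc
      rw [← dist_eq_norm]
      linarith [dist_triangle_right b c a]
    have hray : SameRay ℝ (b - c) u := hu_ray hcbp.sameRay_vsub
    have hdist : dist c (b - u) = |‖b - c‖ - r| := by
      rw [← hu_norm, ← hray.norm_sub, dist_comm, dist_eq_norm, sub_right_comm]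
    rw [mem_closedBall, hdist, abs_le]
    constructor <;> linarith [norm_nonneg (b - c)]
  · have hdist : dist p (b - u) = ‖p - b‖ + r := by
      rw [dist_eq_norm, sub_sub_eq_add_sub, add_sub_right_comm,
        (hu_ray (SameRay.refl _)).norm_add, hu_norm]
    rw [mem_closedBall, hdist] at hpy
    linarith

end BallSeparation

section BallHull

open Filter Topology

section Metric

variable {X ι : Type*} [PseudoMetricSpace X] [Preorder ι] {C : ι → Set X} {x : ι → X} {a : X}
  {r : ℝ}

theorem iUnion_subset_closedBall_of_mapClusterPt (hC : Monotone C)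
    (hx : ∀ i, C i ⊆ closedBall (x i) r) (ha : MapClusterPt a atTop x) :
    ⋃ i, C i ⊆ closedBall a r := by
  refine iUnion_subset fun i c hc => mem_closedBall_comm.1 ?_
  refine isClosed_closedBall.mem_of_mapClusterPt ha ?_
  filter_upwards [eventually_ge_atTop i] with j hij
  exact mem_closedBall_comm.1 (hx j (hC hij hc))

theorem exists_mapClusterPt_of_subset_closedBall [ProperSpace X] [IsDirectedOrder ι] [Nonempty ι]
    (hC : Monotone C) (hne : (⋃ i, C i).Nonempty) (hx : ∀ i, C i ⊆ closedBall (x i) r) :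
    ∃ a, MapClusterPt a atTop x := by
  obtain ⟨c, hc⟩ := hne
  obtain ⟨i, hi⟩ := mem_iUnion.1 hc
  have hev : ∀ᶠ j in atTop, x j ∈ closedBall c r := by
    filter_upwards [eventually_ge_atTop i] with j hij
    exact mem_closedBall_comm.1 (hx j (hC hij hi))
  obtain ⟨a, -, ha⟩ := (isCompact_closedBall c r).exists_mapClusterPt (le_principal_iff.2 hev)
  exact ⟨a, ha⟩

end Metric

section NormedAddCommGroup

variable {E : Type*} [NormedAddCommGroup E] {s : Set E} {p : E}

theorem mem_ballHull : p ∈ ballHull s ↔ ∀ x, s ⊆ closedBall x 1 → p ∈ closedBall x 1 := by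
  simp only [ballHull, mem_iInter, mem_ofPred_eq]

theorem subset_ballHull_s13 : s ⊆ ballHull s := fun _ hp => mem_ballHull.2 fun _ hx => hx hp

theorem isClosed_ballHull_s13 : IsClosed (ballHull s) :=
  isClosed_biInter fun _ _ => isClosed_closedBall

theorem closure_subset_ballHull : closure s ⊆ ballHull s :=
  closure_minimal subset_ballHull_s13 isClosed_ballHull_s13

theorem ballHull_closure : ballHull (closure s) = ballHull s := by
  simp only [ballHull, isClosed_closedBall.closure_subset_iff]

variable [NormedSpace ℝ E]

theorem convex_ballHull : Convex ℝ (ballHull s) :=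
  convex_iInter₂ fun x _ => convex_closedBall x 1

theorem IsBConvexBody.convex (hs : IsBConvexBody s) : Convex ℝ s :=
  hs.2.2 ▸ convex_ballHull

theorem IsBConvexBody.exists_subset_closedBall [Nontrivial E] (hs : IsBConvexBody s) :
    ∃ x, s ⊆ closedBall x 1 := by
  by_contra! h
  have huniv : s = univ := hs.2.2 ▸ eq_univ_of_forall fun p =>
    mem_ballHull.2 fun x hx => absurd hx (h x)
  exact NormedSpace.unbounded_univ ℝ E (huniv ▸ hs.1)

theorem ballHull_subset_of_collinear [ProperSpace E] {a : E} (hclosed : IsClosed s)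
    (hs : Convex ℝ s) (hne : s.Nonempty) (hsa : s ⊆ closedBall a 1)
    (hcol : Collinear ℝ (ballHull s)) : ballHull s ⊆ s := by
  intro p hp
  by_contra hps
  obtain ⟨y, hsy, hpy⟩ := exists_subset_closedBall_notMem_of_collinear hclosed hs hne hsa hps
    (hcol.subset (insert_subset hp subset_ballHull_s13))
  exact hpy (mem_ballHull.1 hp y hsy)

end NormedAddCommGroup

section DirectedUnion

variable {E ι : Type*} [NormedAddCommGroup E] [Nonempty ι] {C : ι → Set E}

theorem nonempty_iUnion_of_isBConvexBody (hC : ∀ i, IsBConvexBody (C i)) :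
    (⋃ i, C i).Nonempty :=
  nonempty_iUnion.2 ⟨Classical.arbitrary ι, (hC _).2.1⟩

variable [Preorder ι] [IsDirectedOrder ι]

theorem exists_iUnion_subset_closedBall [NormedSpace ℝ E] [Nontrivial E] [ProperSpace E]
    (hmono : Monotone C) (hC : ∀ i, IsBConvexBody (C i)) :
    ∃ a, ⋃ i, C i ⊆ closedBall a 1 := by
  choose x hx using fun i => (hC i).exists_subset_closedBall
  obtain ⟨a, ha⟩ := exists_mapClusterPt_of_subset_closedBall hmono
    (nonempty_iUnion_of_isBConvexBody hC) hx
  exact ⟨a, iUnion_subset_closedBall_of_mapClusterPt hmono hx ha⟩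

/-- `a` is a cluster point of centres of unit balls that contain `C i` but not `p`. -/
theorem exists_isMaxOn_dist_frequently_dist_lt_dist [ProperSpace E] {p : E} (hmono : Monotone C)
    (hC : ∀ i, IsBConvexBody (C i)) (hpC : p ∉ ⋃ i, C i) :
    ∃ a, p ≠ a ∧ IsMaxOn (dist · a) (ballHull (⋃ i, C i)) p ∧
      ∃ᶠ y in 𝓝 a, ∃ c ∈ ⋃ i, C i, dist c y < dist p y := by
  have hsep (i : ι) : ∃ y, C i ⊆ closedBall y 1 ∧ 1 < dist p y := by
    have hpi : p ∉ ballHull (C i) := (hC i).2.2.symm ▸ fun h => hpC (mem_iUnion_of_mem i h)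
    simpa [mem_ballHull] using hpi
  choose x hx hpx using hsep
  obtain ⟨a, ha⟩ := exists_mapClusterPt_of_subset_closedBall hmono
    (nonempty_iUnion_of_isBConvexBody hC) hx
  have hpa : 1 ≤ dist p a :=
    (isClosed_le continuous_const (continuous_const.dist continuous_id)).mem_of_mapClusterPt ha
      (Eventually.of_forall fun i => (hpx i).le)
  refine ⟨a, dist_pos.1 (one_pos.trans_le hpa), fun q hq => ?_, fun hev => ?_⟩
  · exact (mem_ballHull.1 hq a (iUnion_subset_closedBall_of_mapClusterPt hmono hx ha)).trans hpa
  · obtain ⟨i, hi⟩ := (ha.frequently hev).exists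
    obtain ⟨c, hc⟩ := (hC i).2.1
    exact hi ⟨c, mem_iUnion_of_mem i hc, (hx i hc).trans_lt (hpx i)⟩

variable [NormedSpace ℝ E] [FiniteDimensional ℝ E]

theorem intrinsicInterior_ballHull_iUnion_subset (hmono : Monotone C)
    (hC : ∀ i, IsBConvexBody (C i))
    (hdim : Module.finrank ℝ E ≤
      Module.finrank ℝ (affineSpan ℝ (ballHull (⋃ i, C i))).direction + 1) :
    intrinsicInterior ℝ (ballHull (⋃ i, C i)) ⊆ ⋃ i, C i := by
  intro p hp
  by_contra hpC
  obtain ⟨a, hpa, hmax, hfreq⟩ := exists_isMaxOn_dist_frequently_dist_lt_dist hmono hC hpC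
  obtain ⟨y, ⟨c, hc, hlt⟩, hle⟩ := (hfreq.and_eventually
    (eventually_forall_dist_le_dist_of_isMaxOn_dist hp hmax hpa hdim)).exists
  exact hlt.not_ge (hle c (subset_ballHull_s13 hc))

theorem ballHull_iUnion_subset_closure_of_finrank_le (hmono : Monotone C)
    (hC : ∀ i, IsBConvexBody (C i))
    (hdim : Module.finrank ℝ E ≤
      Module.finrank ℝ (affineSpan ℝ (ballHull (⋃ i, C i))).direction + 1) :
    ballHull (⋃ i, C i) ⊆ closure (⋃ i, C i) := by
  have hne := (nonempty_iUnion_of_isBConvexBody hC).mono subset_ballHull_s13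
  calc
    ballHull (⋃ i, C i) ⊆ closure (intrinsicInterior ℝ (ballHull (⋃ i, C i))) :=
      subset_closure_intrinsicInterior convex_ballHull (hne.intrinsicInterior convex_ballHull)
    _ ⊆ closure (⋃ i, C i) := closure_mono (intrinsicInterior_ballHull_iUnion_subset hmono hC hdim)

theorem ballHull_iUnion_subset_closure_of_finrank_le_one [Nontrivial E] (hmono : Monotone C)
    (hC : ∀ i, IsBConvexBody (C i))
    (hdim : Module.finrank ℝ (affineSpan ℝ (ballHull (⋃ i, C i))).direction ≤ 1) :
    ballHull (⋃ i, C i) ⊆ closure (⋃ i, C i) := by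
  obtain ⟨a, ha⟩ := exists_iUnion_subset_closedBall hmono hC
  have hconvex : Convex ℝ (⋃ i, C i) :=
    hmono.directed_le.convex_iUnion fun i => (hC i).convex
  have hcol : Collinear ℝ (ballHull (⋃ i, C i)) := by
    rwa [collinear_iff_finrank_le_one, ← direction_affineSpan]
  rw [← ballHull_closure] at hcol ⊢
  exact ballHull_subset_of_collinear isClosed_closure hconvex.closure
    (nonempty_iUnion_of_isBConvexBody hC).closure (closure_minimal ha isClosed_closedBall) hcol

end DirectedUnion

end BallHull

theorem stmt_13_general {E ι : Type*} [NormedAddCommGroup E] [NormedSpace ℝ E]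
    [FiniteDimensional ℝ E] [Nontrivial E] [Preorder ι] [IsDirectedOrder ι] [Nonempty ι]
    (C : ι → Set E) (hmono : Monotone C) (hbody : ∀ i, IsBConvexBody (C i))
    (hdim : Module.finrank ℝ (affineSpan ℝ (ballHull (⋃ i, C i))).direction ∈
      ({0, 1, Module.finrank ℝ E - 1, Module.finrank ℝ E} : Set ℕ)) :
    closure (⋃ i, C i) = ballHull (⋃ i, C i) ∧
      IsBConvexBody (closure (⋃ i, C i)) := by
  obtain ⟨a, ha⟩ := exists_iUnion_subset_closedBall hmono hbody
  have heq : closure (⋃ i, C i) = ballHull (⋃ i, C i) := by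
    refine closure_subset_ballHull.antisymm ?_
    rcases hdim with hdim | hdim | hdim | hdim
    · exact ballHull_iUnion_subset_closure_of_finrank_le_one hmono hbody (by lia)
    · exact ballHull_iUnion_subset_closure_of_finrank_le_one hmono hbody hdim.le
    · exact ballHull_iUnion_subset_closure_of_finrank_le hmono hbody (by lia)
    · exact ballHull_iUnion_subset_closure_of_finrank_le hmono hbody (hdim.ge.trans (Nat.le_succ _))
  exact ⟨heq, (isBounded_closedBall.subset ha).closure,
    (nonempty_iUnion_of_isBConvexBody hbody).closure, ballHull_closure.trans heq.symm⟩

theorem stmt_13 {E : Type*} [NormedAddCommGroup E] [NormedSpace ℝ E]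
    [FiniteDimensional ℝ E] [Nontrivial E]
    (C : ℕ → Set E) (hmono : Monotone C) (hbody : ∀ i, IsBConvexBody (C i))
    (hdim : Module.finrank ℝ (affineSpan ℝ (ballHull (⋃ i, C i))).direction ∈
      ({0, 1, Module.finrank ℝ E - 1, Module.finrank ℝ E} : Set ℕ)) :
    closure (⋃ i, C i) = ballHull (⋃ i, C i) ∧
      IsBConvexBody (closure (⋃ i, C i)) :=
  stmt_13_general C hmono hbody hdim
end
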